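/- Let 3/5 ≤ α ≤ 2/3 and β > 0, and suppose τ(n) ≥ β·n^α for all n ≥ 2. Then for all r ≥ 2 and all n ≥ 2, t^(r)(n) ≥ β_r·(n/(6r))^{α·η_{r-1}}, where η_s = 1/(2^s − 1), β_2 = β, and for r ≥ 3, β_r = min{ min_{2 ≤ p ≤ r−2} β_p·(12r)^{−α·η_{p−1}}, β·2^{−α} } (for r = 3 the inner minimum over p is empty, so β_3 = β·2^{−α}). -/

import Mathlib

/-- A (sub-)matching: a finite set of pairwise disjoint `r`-element subsets
("edges") of the linearly ordered vertex set `ℕ`. -/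
def IsMatching (r : ℕ) (M : Finset (Finset ℕ)) : Prop :=
  (∀ e ∈ M, e.card = r) ∧ ∀ e ∈ M, ∀ f ∈ M, e ≠ f → Disjoint e f

/-- The vertex support of a matching: the union of its edges. -/
def mSupport (M : Finset (Finset ℕ)) : Finset ℕ := M.sup id

/-- An ordered `r`-matching of size `n`: `n` pairwise disjoint `r`-element edges
partitioning `[rn] = {1, …, rn}`. -/
def IsOrderedMatching (r n : ℕ) (M : Finset (Finset ℕ)) : Prop :=
  IsMatching r M ∧ M.card = n ∧ mSupport M = Finset.Icc 1 (r * n)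

/-- Two ordered matchings are isomorphic if some (equivalently, the unique)
order-preserving bijection between their vertex supports maps edges onto edges. -/
def MatchIso (M N : Finset (Finset ℕ)) : Prop :=
  ∃ f : ℕ → ℕ, Set.BijOn f (mSupport M : Set ℕ) (mSupport N : Set ℕ) ∧
    (∀ x ∈ mSupport M, ∀ y ∈ mSupport M, x < y → f x < f y) ∧
    N = M.image fun e => e.image f

/-- `M` contains twins of size `k`: a pair of vertex-disjoint isomorphic
sub-matchings of `M`, each with `k` edges. -/
def HasTwins (M : Finset (Finset ℕ)) (k : ℕ) : Prop :=
  ∃ M₁ M₂ : Finset (Finset ℕ), M₁ ⊆ M ∧ M₂ ⊆ M ∧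
    Disjoint (mSupport M₁) (mSupport M₂) ∧ MatchIso M₁ M₂ ∧
    M₁.card = k ∧ M₂.card = k

/-- `t(M)`: the maximum size of twins in `M`. -/
noncomputable def twinMax (M : Finset (Finset ℕ)) : ℕ := sSup {k | HasTwins M k}

/-- `t^(r)(n)`: the minimum of `t(M)` over all ordered `r`-matchings of size `n`. -/
noncomputable def minTwins (r n : ℕ) : ℕ :=
  sInf {t | ∃ M, IsOrderedMatching r n M ∧ twinMax M = t}

/-- A permutation `π` of `[n]` has twins of length `k`: two order-isomorphic
subsequences occupying disjoint sets of positions. -/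
def PermTwins {n : ℕ} (π : Equiv.Perm (Fin n)) (k : ℕ) : Prop :=
  ∃ a b : Fin k → Fin n, StrictMono a ∧ StrictMono b ∧
    (∀ i j, a i ≠ b j) ∧ ∀ i j, (π (a i) < π (a j) ↔ π (b i) < π (b j))

/-- `τ(n)`: the largest `k` such that every permutation of `[n]` has twins of length `k`. -/
noncomputable def permTau (n : ℕ) : ℕ :=
  sSup {k | ∀ π : Equiv.Perm (Fin n), PermTwins π k}

/-- An `r`-pattern, represented by its canonical representative: an ordered
`r`-matching of size `2` (on the vertex set `[2r]`). Every isomorphism class of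
ordered `r`-matchings of size `2` contains exactly one such representative. -/
def IsPattern (r : ℕ) (P : Finset (Finset ℕ)) : Prop := IsOrderedMatching r 2 P

/-- A `P`-clique: a matching all of whose pairs of (distinct) edges form the pattern `P`. -/
def IsPClique (P M : Finset (Finset ℕ)) : Prop :=
  ∀ e ∈ M, ∀ f ∈ M, e ≠ f → MatchIso {e, f} P

/-- `L(M)`: the size of the largest sub-matching of `M` that is a `P`-clique,
over all `r`-patterns `P`. -/
noncomputable def cliqueMax (r : ℕ) (M : Finset (Finset ℕ)) : ℕ :=
  sSup {k | ∃ P, IsPattern r P ∧ ∃ M' ⊆ M, IsPClique P M' ∧ M'.card = k}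

/-- `L_r(n)`: the minimum of `L(M)` over all ordered `r`-matchings of size `n`. -/
noncomputable def minClique (r n : ℕ) : ℕ :=
  sInf {l | ∃ M, IsOrderedMatching r n M ∧ cliqueMax r M = l}

/-- `η_s = 1/(2^s - 1)`. -/
noncomputable def etaExp (s : ℕ) : ℝ := 1 / ((2 : ℝ) ^ s - 1)

/-!
Suppose first that some point is crossed by at least a sixth of the `r`-edges. By pigeonhole, many
of them have the same number of vertices to its left, so that the point cuts these edges into two
blocks. Given edges that are cut into blocks by several points, either many of them straddle a
common point between two vertices of the same block, which is then a further cut, or there is a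
large independent set in the digraph of all `e → f` such that the first vertex of `f` in some block
falls between two consecutive vertices of `e`, because its in-degrees are small. In an independent
set no two edges interleave within a block, so the isomorphism type of a subset is determined by
the permutations that relate the orders of the first vertices in different blocks. Erdős–Szekeres
makes all but one of these permutations monotone, and twins in the remaining permutation are twins
in the matching.

If no point is crossed by a sixth of the edges, a suitable point leaves at least `3/8` of the edges
entirely on either side. Twins on the two sides can be put together, and induction applies because
`2 * (3 / 8) ^ γ ≥ 1` for `γ ≤ 2 / 3`.

For `r ≥ 3` this gives the constant `β * 2 ^ (-α)`, which is one of the terms in the minimum that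
defines `B r`.
-/

section Order

open Finset

theorem exists_isChain_or_isAntichain_of_mul_lt_card {V : Type*}
    (R : V → V → Prop) [IsTrans V R] [Std.Irrefl R] (a b : ℕ) (M : Finset V)
    (hM : a * b < #M) :
    (∃ C ⊆ M, a < #C ∧ IsChain R (C : Set V)) ∨ ∃ A ⊆ M, b < #A ∧ IsAntichain R (A : Set V) := by
  classical
  suffices h : (∃ C ⊆ M, a < #C ∧ IsChain R (C : Set V) ∧ ∃ x ∈ C, ∀ y ∈ C, y ≠ x → R x y) ∨
      ∃ A ⊆ M, b < #A ∧ IsAntichain R (A : Set V) from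
    h.imp_left fun ⟨C, hCM, hC, hchain, _⟩ => ⟨C, hCM, hC, hchain⟩
  induction a generalizing M with
  | zero =>
    obtain ⟨x, hx⟩ : M.Nonempty := card_pos.mp (by omega)
    exact .inl ⟨{x}, by simpa using hx, by simp, by simp, x, by simp, by simp⟩
  | succ a ih =>
    -- Without the minimal elements, every chain can still be extended downwards within `M`.
    set A := M.filter fun x => ∀ y ∈ M, ¬R y x with hA
    have hanti : IsAntichain R (A : Set V) := fun x hx y hy _ =>
      (mem_filter.mp hy).2 x (mem_filter.mp hx).1
    by_cases hAb : b < #A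
    · exact .inr ⟨A, filter_subset _ _, hAb, hanti⟩
    have hrest : a * b < #(M \ A) := by
      have := card_sdiff_add_card_eq_card (hA ▸ filter_subset _ M : A ⊆ M)
      rw [add_one_mul] at hM
      omega
    refine (ih (M \ A) hrest).imp ?_ fun ⟨A', hA', h⟩ => ⟨A', hA'.trans sdiff_subset, h⟩
    rintro ⟨C, hCM, hC, hchain, x, hxC, hxmin⟩
    obtain ⟨y, hyM, hyx⟩ : ∃ y ∈ M, R y x := by
      simpa [hA, (mem_sdiff.mp (hCM hxC)).1] using (mem_sdiff.mp (hCM hxC)).2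
    have hyC : ∀ z ∈ C, R y z := fun z hz => by
      rcases eq_or_ne z x with rfl | hzx
      exacts [hyx, _root_.trans hyx (hxmin z hz hzx)]
    have hy_notMem : y ∉ C := fun hy => irrefl y (hyC y hy)
    refine ⟨insert y C, insert_subset hyM (hCM.trans sdiff_subset), ?_, ?_, y,
      mem_insert_self y C, fun z hz hzy => hyC z (mem_of_mem_insert_of_ne hz hzy)⟩
    · rw [card_insert_of_notMem hy_notMem]
      omega
    · rw [coe_insert]
      exact hchain.insert fun z hz _ => .inl (hyC z hz)

variable {V α β : Type*} [LinearOrder α] [LinearOrder β]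

theorem exists_monovaryOn_or_antivaryOn_of_mul_lt_card (h : V → β) (g : V → α) (a b : ℕ)
    (M : Finset V) (hM : a * b < #M) :
    (∃ C ⊆ M, a < #C ∧ MonovaryOn h g C) ∨ ∃ A ⊆ M, b < #A ∧ AntivaryOn h g A := by
  let R : V → V → Prop := fun x y => g x < g y ∧ h x < h y
  have : IsTrans V R := ⟨fun _ _ _ hxy hyz => ⟨hxy.1.trans hyz.1, hxy.2.trans hyz.2⟩⟩
  have : Std.Irrefl R := ⟨fun _ hx => hx.1.false⟩
  refine (exists_isChain_or_isAntichain_of_mul_lt_card R a b M hM).imp ?_ ?_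
  · rintro ⟨C, hCM, hC, hchain⟩
    refine ⟨C, hCM, hC, fun x hx y hy hxy => ?_⟩
    rcases hchain hx hy (ne_of_apply_ne g hxy.ne) with hR | hR
    exacts [hR.2.le, absurd hR.1 hxy.asymm]
  · rintro ⟨A, hAM, hA, hanti⟩
    exact ⟨A, hAM, hA, fun x hx y hy hxy =>
      not_lt.mp fun hlt => hanti hx hy (ne_of_apply_ne g hxy.ne) ⟨hxy, hlt⟩⟩

theorem exists_forall_monovaryOn_or_antivaryOn {ι : Type*} (h : ι → V → β)
    (g : V → α) (S : ℕ) (K : Finset ι) (M : Finset V) (hM : S ^ 2 ^ #K ≤ #M) :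
    ∃ M' ⊆ M, S ≤ #M' ∧ ∀ j ∈ K, MonovaryOn (h j) g M' ∨ AntivaryOn (h j) g M' := by
  classical
  induction K using Finset.induction_on generalizing M with
  | empty => exact ⟨M, Subset.rfl, by simpa using hM, by simp⟩
  | insert j K hj ih =>
    obtain ⟨M₁, hM₁, hcard, hj₁⟩ : ∃ M₁ ⊆ M, S ^ 2 ^ #K ≤ #M₁ ∧
        (MonovaryOn (h j) g M₁ ∨ AntivaryOn (h j) g M₁) := by
      rw [card_insert_of_notMem hj, pow_succ 2, pow_mul, sq] at hM
      generalize S ^ 2 ^ #K = T at hM ⊢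
      rcases T with _ | t
      · exact ⟨∅, empty_subset M, zero_le, .inl (by simp)⟩
      · rcases exists_monovaryOn_or_antivaryOn_of_mul_lt_card (h j) g t t M (by nlinarith) with
          ⟨C, hCM, hC, hmono⟩ | ⟨A, hAM, hA, hanti⟩
        exacts [⟨C, hCM, hC, .inl hmono⟩, ⟨A, hAM, hA, .inr hanti⟩]
    obtain ⟨M₂, hM₂, hcard₂, hK⟩ := ih M₁ hcard
    refine ⟨M₂, hM₂.trans hM₁, hcard₂, forall_mem_insert .. |>.mpr ⟨?_, hK⟩⟩
    exact hj₁.imp (·.subset (coe_subset.mpr hM₂)) (·.subset (coe_subset.mpr hM₂))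

theorem lt_iff_lt_of_monovaryOn {s : Set V} {h : V → β} {g : V → α} (H : MonovaryOn h g s)
    (hh : s.InjOn h) (hg : s.InjOn g) {x y : V} (hx : x ∈ s) (hy : y ∈ s) :
    h x < h y ↔ g x < g y := by
  refine ⟨fun hxy => ?_, fun hxy => ?_⟩
  · refine lt_of_le_of_ne (not_lt.mp fun hgt => (H hy hx hgt).not_gt hxy) ?_
    exact fun heq => hxy.ne (congrArg h (hg hx hy heq))
  · exact lt_of_le_of_ne (H hx hy hxy) fun heq => hxy.ne (congrArg g (hh hx hy heq))

theorem lt_iff_lt_of_antivaryOn {s : Set V} {h : V → β} {g : V → α} (H : AntivaryOn h g s)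
    (hh : s.InjOn h) (hg : s.InjOn g) {x y : V} (hx : x ∈ s) (hy : y ∈ s) :
    h x < h y ↔ g y < g x :=
  lt_iff_lt_of_monovaryOn H.dual_right hh (OrderDual.toDual.injective.comp_injOn hg) hx hy

theorem exists_lt_le_succ {u : ℕ → α} {x : α} {s t : ℕ} (hst : s ≤ t) (hs : u s < x)
    (ht : x ≤ u t) : ∃ j, s ≤ j ∧ j < t ∧ u j < x ∧ x ≤ u (j + 1) := by
  induction t, hst using Nat.le_induction with
  | base => exact absurd hs ht.not_gt
  | succ t hst ih =>
    rcases lt_or_ge (u t) x with h | h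
    · exact ⟨t, hst, t.lt_succ_self, h, ht⟩
    · obtain ⟨j, hsj, hjt, hj⟩ := ih h
      exact ⟨j, hsj, hjt.trans t.lt_succ_self, hj⟩

end Order

section Digraph

open Finset

theorem exists_isAntichain_of_card_filter_le {V : Type*} (R : V → V → Prop) [DecidableRel R]
    (D : ℕ) (M : Finset V) (hdeg : ∀ y ∈ M, #{x ∈ M | R x y} ≤ D) :
    ∃ I ⊆ M, #M ≤ (2 * D + 1) * #I ∧ IsAntichain R (I : Set V) := by
  classical
  induction M using Finset.strongInduction with
  | H M ih =>
    rcases M.eq_empty_or_nonempty with rfl | hne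
    · exact ⟨∅, Subset.rfl, by simp, by simp⟩
    -- Out-degrees and in-degrees have the same sum.
    obtain ⟨v, hv, hvD⟩ : ∃ v ∈ M, #{y ∈ M | R v y} ≤ D := by
      refine exists_le_of_sum_le hne ?_
      calc ∑ x ∈ M, #{y ∈ M | R x y} = ∑ y ∈ M, #{x ∈ M | R x y} := by
            simp only [card_filter]
            exact sum_comm
        _ ≤ ∑ _ ∈ M, D := sum_le_sum hdeg
    set W := {y ∈ M | ¬(y = v ∨ R v y ∨ R y v)} with hW
    have hWM : W ⊆ M := filter_subset _ _
    have hvW : v ∉ W := by simp [W]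
    obtain ⟨I, hIW, hI, hanti⟩ := ih W ⟨hWM, fun h => hvW (h hv)⟩ fun y hy =>
      (card_le_card (filter_subset_filter _ hWM)).trans (hdeg y (hWM hy))
    have hcard : #M ≤ #W + (1 + (D + D)) := by
      have hcover : M ⊆ W ∪ ({v} ∪ ({y ∈ M | R v y} ∪ {x ∈ M | R x v})) := by
        intro y hy
        simp only [hW, mem_union, mem_filter, mem_singleton]
        tauto
      have := hdeg v hv
      grw [card_le_card hcover, card_union_le, card_union_le, card_union_le, card_singleton, hvD,
        this]
    refine ⟨insert v I, insert_subset hv (hIW.trans hWM), ?_, ?_⟩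
    · rw [card_insert_of_notMem fun h => hvW (hIW h)]
      linarith
    · have hfar : ∀ y ∈ I, ¬(y = v ∨ R v y ∨ R y v) := fun y hy => (mem_filter.mp (hIW hy)).2
      rw [coe_insert]
      exact hanti.insert (fun y hy _ h => hfar y hy (.inr (.inr h)))
        fun y hy _ h => hfar y hy (.inr (.inl h))

end Digraph

section PermTau

theorem PermTwins.two_mul_le {n k : ℕ} {π : Equiv.Perm (Fin n)} (h : PermTwins π k) :
    2 * k ≤ n := by
  obtain ⟨a, b, ha, hb, hab, -⟩ := h
  simpa [two_mul] using
    Fintype.card_le_of_injective _ (ha.injective.sumElim hb.injective hab)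

theorem permTwins_permTau {n : ℕ} (π : Equiv.Perm (Fin n)) : PermTwins π (permTau n) := by
  have hne : {k | ∀ π : Equiv.Perm (Fin n), PermTwins π k}.Nonempty :=
    ⟨0, fun _ => ⟨Fin.elim0, Fin.elim0, fun i => i.elim0, fun i => i.elim0, fun i => i.elim0,
      fun i => i.elim0⟩⟩
  have hbdd : BddAbove {k | ∀ π : Equiv.Perm (Fin n), PermTwins π k} :=
    ⟨n, fun k hk => by linarith [(hk 1).two_mul_le]⟩
  exact Nat.sSup_mem hne hbdd π

theorem two_mul_permTau_le (n : ℕ) : 2 * permTau n ≤ n :=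
  (permTwins_permTau 1).two_mul_le

theorem strictMono_comp_sort {n : ℕ} {α : Type*} [LinearOrder α] {w : Fin n → α}
    (hw : Function.Injective w) : StrictMono (w ∘ Tuple.sort w) :=
  (Tuple.monotone_sort w).strictMono_of_injective (hw.comp (Tuple.sort w).injective)

theorem exists_twins_of_injOn {V α β : Type*} [LinearOrder α] [LinearOrder β] (M : Finset V)
    (g : V → α) (h : V → β) (hg : Set.InjOn g M) (hh : Set.InjOn h M) :
    ∃ a b : Fin (permTau M.card) → V, (∀ p, a p ∈ M) ∧ (∀ p, b p ∈ M) ∧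
      Function.Injective a ∧ Function.Injective b ∧ (∀ p q, a p ≠ b q) ∧
      (∀ p q, g (a p) < g (a q) ↔ g (b p) < g (b q)) ∧
      ∀ p q, h (a p) < h (a q) ↔ h (b p) < h (b q) := by
  let v : Fin M.card → M := M.equivFin.symm
  have hv : Function.Injective v := M.equivFin.symm.injective
  let u : Fin M.card → M := v ∘ Tuple.sort fun i => g (v i)
  have hu : Function.Injective fun i => (u i : V) :=
    Subtype.val_injective.comp (hv.comp (Equiv.injective _))
  have hgu : ∀ i j, g (u i) < g (u j) ↔ i < j := fun _ _ =>
    (strictMono_comp_sort (hg.injective.comp hv)).lt_iff_lt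
  let w : Fin M.card → β := fun i => h (u i)
  have hw : StrictMono (w ∘ Tuple.sort w) :=
    strictMono_comp_sort fun i j hij => hu (hh (u i).2 (u j).2 hij)
  have hrank : ∀ i j, (Tuple.sort w).symm i < (Tuple.sort w).symm j ↔ w i < w j := fun i j => by
    simpa using (hw.lt_iff_lt (a := (Tuple.sort w).symm i) (b := (Tuple.sort w).symm j)).symm
  obtain ⟨a, b, ha, hb, hab, hπ⟩ := permTwins_permTau (Tuple.sort w).symm
  refine ⟨fun p => u (a p), fun p => u (b p), fun p => (u (a p)).2, fun p => (u (b p)).2,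
    hu.comp ha.injective, hu.comp hb.injective, fun p q heq => hab p q (hu heq),
    fun p q => ?_, fun p q => ?_⟩
  · rw [hgu, hgu, ha.lt_iff_lt, hb.lt_iff_lt]
  · exact (hrank _ _).symm.trans ((hπ p q).trans (hrank _ _))

end PermTau

section Vertex

open Finset

/-- The `i`-th smallest vertex of the edge `e`, counting from zero (and `0` if `e` has at most `i`
vertices). The paper counts from one. -/
noncomputable def vertex (e : Finset ℕ) (i : ℕ) : ℕ := Nat.nth (· ∈ e) i

variable {e : Finset ℕ} {i j : ℕ}

theorem vertex_mem (hi : i < #e) : vertex e i ∈ e :=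
  Nat.nth_mem_of_lt_card e.finite_toSet (by simpa using hi)

theorem vertex_lt_vertex (hij : i < j) (hj : j < #e) : vertex e i < vertex e j :=
  Nat.nth_lt_nth_of_lt_card e.finite_toSet hij (by simpa using hj)

theorem vertex_le_vertex (hij : i ≤ j) (hj : j < #e) : vertex e i ≤ vertex e j :=
  hij.eq_or_lt.elim (fun h => h ▸ le_rfl) fun h => (vertex_lt_vertex h hj).le

theorem vertex_lt_vertex_iff (hi : i < #e) (hj : j < #e) : vertex e i < vertex e j ↔ i < j :=
  ⟨fun h => not_le.mp fun hji => (vertex_le_vertex hji hi).not_gt h, fun h => vertex_lt_vertex h hj⟩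

theorem exists_vertex_eq {x : ℕ} (hx : x ∈ e) : ∃ i < #e, vertex e i = x := by
  simpa [vertex] using Nat.exists_lt_card_finite_nth_eq (p := (· ∈ e)) e.finite_toSet hx

theorem image_vertex (e : Finset ℕ) : (range #e).image (vertex e) = e := by
  ext x
  simp only [mem_image, mem_range]
  exact ⟨fun ⟨i, hi, hx⟩ => hx ▸ vertex_mem hi, exists_vertex_eq⟩

end Vertex

section Matching

open Finset

variable {r k l : ℕ} {M N : Finset (Finset ℕ)}

theorem mem_mSupport {x : ℕ} : x ∈ mSupport M ↔ ∃ e ∈ M, x ∈ e := by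
  simp [mSupport, mem_sup]

theorem subset_mSupport {e : Finset ℕ} (he : e ∈ M) : e ⊆ mSupport M :=
  fun _ hx => mem_mSupport.mpr ⟨e, he, hx⟩

theorem mSupport_subset_mSupport (hMN : M ⊆ N) : mSupport M ⊆ mSupport N :=
  sup_mono hMN

theorem mSupport_union (M N : Finset (Finset ℕ)) :
    mSupport (M ∪ N) = mSupport M ∪ mSupport N :=
  sup_union

theorem mSupport_image_image (M : Finset (Finset ℕ)) (f : ℕ → ℕ) :
    mSupport (M.image (·.image f)) = (mSupport M).image f := by
  simp only [mSupport, sup_eq_biUnion, image_biUnion, biUnion_image, id]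

theorem image_mSupport_subset {f : ℕ → ℕ} (hf : ∀ e ∈ M, e.image f ∈ N) :
    (mSupport M).image f ⊆ mSupport N := by
  rw [← mSupport_image_image]
  exact mSupport_subset_mSupport (image_subset_iff.mpr hf)

theorem IsMatching.subset (hM : IsMatching r M) (hNM : N ⊆ M) : IsMatching r N :=
  ⟨fun e he => hM.1 e (hNM he), fun e he f hf => hM.2 e (hNM he) f (hNM hf)⟩

theorem IsMatching.vertex_ne (hM : IsMatching r M) {e f : Finset ℕ} (he : e ∈ M) (hf : f ∈ M)
    (hef : e ≠ f) {i j : ℕ} (hi : i < r) (hj : j < r) : vertex e i ≠ vertex f j :=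
  disjoint_iff_ne.mp (hM.2 e he f hf hef) _ (vertex_mem (hM.1 e he ▸ hi)) _
    (vertex_mem (hM.1 f hf ▸ hj))

theorem IsMatching.injOn_vertex (hM : IsMatching r M) {i : ℕ} (hi : i < r) :
    Set.InjOn (vertex · i) (M : Set (Finset ℕ)) :=
  fun _ he _ hf heq => by_contra fun hef => hM.vertex_ne he hf hef hi hi heq

theorem hasTwins_iff : HasTwins M k ↔ ∃ A ⊆ M, ∃ f : ℕ → ℕ, StrictMonoOn f (mSupport A) ∧
    Disjoint (mSupport A) ((mSupport A).image f) ∧ (∀ e ∈ A, e.image f ∈ M) ∧ #A = k := by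
  constructor
  · rintro ⟨A, B, hA, hB, hAB, ⟨f, -, hf, rfl⟩, hcard, -⟩
    exact ⟨A, hA, f, hf, mSupport_image_image A f ▸ hAB,
      fun e he => hB (mem_image_of_mem _ he), hcard⟩
  · rintro ⟨A, hA, f, hf, hdisj, hfM, hcard⟩
    refine ⟨A, A.image (·.image f), hA, image_subset_iff.mpr hfM,
      mSupport_image_image A f ▸ hdisj, ⟨f, ?_, hf, rfl⟩, hcard, ?_⟩
    · rw [mSupport_image_image, coe_image]
      exact hf.injOn.bijOn_image
    · rw [card_image_of_injOn, hcard]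
      exact (image_injOn_powerset_of_injOn hf.injOn).mono fun e he =>
        mem_coe.mpr (mem_powerset.mpr (subset_mSupport he))

theorem HasTwins.mono (h : HasTwins M k) (hMN : M ⊆ N) : HasTwins N k := by
  obtain ⟨A, B, hA, hB, h⟩ := h
  exact ⟨A, B, hA.trans hMN, hB.trans hMN, h⟩

theorem hasTwins_of_vertex_lt_iff (hM : IsMatching r M) {ι : Type*} [Fintype ι]
    (a b : ι → Finset ℕ) (ha : ∀ p, a p ∈ M) (hb : ∀ p, b p ∈ M) (ha_inj : Function.Injective a)
    (hab : ∀ p q, a p ≠ b q)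
    (hord : ∀ p q, p ≠ q → ∀ i < r, ∀ j < r,
      (vertex (a p) i < vertex (a q) j ↔ vertex (b p) i < vertex (b q) j)) :
    HasTwins M (Fintype.card ι) := by
  let u : ι × Fin r → ℕ := fun x => vertex (a x.1) x.2
  let v : ι × Fin r → ℕ := fun x => vertex (b x.1) x.2
  have huv : ∀ x y, u x < u y ↔ v x < v y := by
    rintro ⟨p, i⟩ ⟨q, j⟩
    rcases eq_or_ne p q with rfl | hpq
    · simp only [u, v]
      rw [vertex_lt_vertex_iff, vertex_lt_vertex_iff] <;> simp [hM.1 _ (ha _), hM.1 _ (hb _)]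
    · exact hord p q hpq i i.2 j j.2
  have hfactor : v.FactorsThrough u := fun x y hxy => le_antisymm
    (not_lt.mp fun h => ((huv y x).mpr h).ne' hxy) (not_lt.mp fun h => ((huv x y).mpr h).ne hxy)
  let f : ℕ → ℕ := Function.extend u v 0
  have hf : ∀ x, f (u x) = v x := hfactor.extend_apply 0
  have himage : ∀ p, (a p).image f = b p := fun p => by
    rw [← image_vertex (a p), image_image, ← image_vertex (b p), hM.1 _ (ha p), hM.1 _ (hb p)]
    exact image_congr fun i hi => hf (p, ⟨i, by simpa using hi⟩)
  have hsupp : ∀ x ∈ mSupport (univ.image a), x ∈ Set.range u := fun x hx => by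
    obtain ⟨e, he, hxe⟩ := mem_mSupport.mp hx
    obtain ⟨p, -, rfl⟩ := mem_image.mp he
    obtain ⟨i, hi, rfl⟩ := exists_vertex_eq hxe
    exact ⟨(p, ⟨i, hM.1 _ (ha p) ▸ hi⟩), rfl⟩
  refine hasTwins_iff.mpr ⟨univ.image a, by simpa [subset_iff] using ha, f, ?_, ?_, ?_, ?_⟩
  · intro x hx y hy hxy
    obtain ⟨x, rfl⟩ := hsupp x hx
    obtain ⟨y, rfl⟩ := hsupp y hy
    rwa [hf, hf, ← huv]
  · rw [← mSupport_image_image, image_image, show (·.image f) ∘ a = b from funext himage]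
    simp only [disjoint_left, mem_mSupport, mem_image, mem_univ, true_and, exists_exists_eq_and]
    rintro x ⟨p, hp⟩ ⟨q, hq⟩
    exact disjoint_left.mp (hM.2 _ (ha p) _ (hb q) (hab p q)) hp hq
  · simpa [himage] using hb
  · rw [card_image_of_injective _ ha_inj, card_univ]

theorem hasTwins_one (hM : IsMatching r M) (hcard : 1 < #M) : HasTwins M 1 := by
  obtain ⟨e, he, f, hf, hef⟩ := one_lt_card.mp hcard
  simpa using hasTwins_of_vertex_lt_iff hM (fun _ : Unit => e) (fun _ => f) (fun _ => he)
    (fun _ => hf) (Function.injective_of_subsingleton _) (fun _ _ => hef)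
    fun p q hpq => absurd (Subsingleton.elim p q) hpq

theorem HasTwins.union_of_separated {x : ℕ} (hMx : ∀ v ∈ mSupport M, v < x)
    (hNx : ∀ v ∈ mSupport N, x ≤ v) (hne : ∀ e ∈ M, e.Nonempty) (hk : HasTwins M k)
    (hl : HasTwins N l) : HasTwins (M ∪ N) (k + l) := by
  obtain ⟨A, hA, f, hf, hfdisj, hfM, rfl⟩ := hasTwins_iff.mp hk
  obtain ⟨B, hB, g, hg, hgdisj, hgN, rfl⟩ := hasTwins_iff.mp hl
  have hAM := mSupport_subset_mSupport hA
  have hBN := mSupport_subset_mSupport hB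
  have hfAM := image_mSupport_subset hfM
  have hgBN := image_mSupport_subset hgN
  have hMN : Disjoint (mSupport M) (mSupport N) :=
    disjoint_left.mpr fun v hvM hvN => (hMx v hvM).not_ge (hNx v hvN)
  let F : ℕ → ℕ := fun v => if v < x then f v else g v
  have hFf : Set.EqOn F f (mSupport A) := fun v hv => if_pos (hMx v (hAM hv))
  have hFg : Set.EqOn F g (mSupport B) := fun v hv => if_neg (hNx v (hBN hv)).not_gt
  have himage : (mSupport (A ∪ B)).image F = (mSupport A).image f ∪ (mSupport B).image g := by
    rw [mSupport_union, image_union, image_congr hFf, image_congr hFg]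
  refine hasTwins_iff.mpr ⟨A ∪ B, union_subset_union hA hB, F, ?_, ?_, ?_, ?_⟩
  · rw [mSupport_union, coe_union]
    rintro u (hu | hu) v (hv | hv) huv
    · rw [hFf hu, hFf hv]
      exact hf hu hv huv
    · rw [hFf hu, hFg hv]
      exact (hMx _ (hfAM (mem_image_of_mem f hu))).trans_le
        (hNx _ (hgBN (mem_image_of_mem g hv)))
    · exact absurd huv ((hMx v (hAM hv)).trans_le (hNx u (hBN hu))).not_gt
    · rw [hFg hu, hFg hv]
      exact hg hu hv huv
  · rw [himage, mSupport_union, disjoint_union_left, disjoint_union_right, disjoint_union_right]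
    exact ⟨⟨hfdisj, hMN.mono hAM hgBN⟩, hMN.symm.mono hBN hfAM, hgdisj⟩
  · intro e he
    rcases mem_union.mp he with he | he
    · rw [image_congr (hFf.mono (coe_subset.mpr (subset_mSupport he)))]
      exact mem_union_left _ (hfM e he)
    · rw [image_congr (hFg.mono (coe_subset.mpr (subset_mSupport he)))]
      exact mem_union_right _ (hgN e he)
  · refine card_union_of_disjoint (disjoint_left.mpr fun e heA heB => ?_)
    obtain ⟨v, hv⟩ := hne e (hA heA)
    exact disjoint_left.mp hMN (hAM (subset_mSupport heA hv)) (hBN (subset_mSupport heB hv))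

theorem bddAbove_hasTwins (M : Finset (Finset ℕ)) : BddAbove {k | HasTwins M k} :=
  ⟨#M, fun _ ⟨_, _, hA, _, _, _, hcard, _⟩ => hcard ▸ card_le_card hA⟩

theorem HasTwins.le_twinMax (h : HasTwins M k) : k ≤ twinMax M :=
  le_csSup (bddAbove_hasTwins M) h

theorem hasTwins_twinMax (M : Finset (Finset ℕ)) : HasTwins M (twinMax M) :=
  Nat.sSup_mem
    ⟨0, hasTwins_iff.mpr ⟨∅, by simp, id, strictMono_id.strictMonoOn _, by simp [mSupport]⟩⟩
    (bddAbove_hasTwins M)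

theorem twinMax_mono (hMN : M ⊆ N) : twinMax M ≤ twinMax N :=
  ((hasTwins_twinMax M).mono hMN).le_twinMax

theorem twinMax_add_le_twinMax_union {x : ℕ} (hMx : ∀ v ∈ mSupport M, v < x)
    (hNx : ∀ v ∈ mSupport N, x ≤ v) (hne : ∀ e ∈ M, e.Nonempty) :
    twinMax M + twinMax N ≤ twinMax (M ∪ N) :=
  ((hasTwins_twinMax M).union_of_separated hMx hNx hne (hasTwins_twinMax N)).le_twinMax

end Matching

section Cut

open Finset

/-- The gaps in `K` are cuts of `M`: for every `j ∈ K`, the vertices of index at most `j` of all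
edges of `M` precede those of index greater than `j`. The blocks of the paper are the maximal
intervals of indices without a cut between two consecutive ones. -/
def IsCut (K : Finset ℕ) (M : Finset (Finset ℕ)) : Prop :=
  ∀ j ∈ K, ∀ e ∈ M, ∀ f ∈ M, vertex e j < vertex f (j + 1)

/-- The least indices of the blocks into which the gaps in `K` divide `ℕ`. -/
def blockStarts (K : Finset ℕ) : Finset ℕ := insert 0 (K.image (· + 1))

/-- The least index in the block of the index `i`. -/
def blockStart (K : Finset ℕ) (i : ℕ) : ℕ := Nat.findGreatest (· ∈ blockStarts K) i

/-- In every block, the vertices of one edge of `M` precede those of the other. It is enough to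
require this of the first vertex of the later edge. -/
def IsSeparated (d : ℕ) (K : Finset ℕ) (M : Finset (Finset ℕ)) : Prop :=
  ∀ e ∈ M, ∀ f ∈ M, ∀ i ≤ d, vertex e (blockStart K i) < vertex f (blockStart K i) →
    vertex e i < vertex f (blockStart K i)

/-- In some block, the first vertex of `f` lies between two consecutive vertices of `e`. -/
def Conflict (d : ℕ) (K e f : Finset ℕ) : Prop :=
  ∃ j ∈ range d \ K, vertex e j < vertex f (blockStart K j) ∧
    vertex f (blockStart K j) ≤ vertex e (j + 1)

/-- The edges of `M` with exactly `j + 1` vertices below `x`, provided that all edges of `M` have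
at least `j + 2` vertices. -/
noncomputable def straddling (M : Finset (Finset ℕ)) (j x : ℕ) : Finset (Finset ℕ) :=
  {e ∈ M | vertex e j < x ∧ x ≤ vertex e (j + 1)}

variable {d S κ i j x : ℕ} {K : Finset ℕ} {M N : Finset (Finset ℕ)}

theorem blockStart_le (K : Finset ℕ) (i : ℕ) : blockStart K i ≤ i :=
  Nat.findGreatest_le i

theorem blockStart_mem (K : Finset ℕ) (i : ℕ) : blockStart K i ∈ blockStarts K :=
  Nat.findGreatest_spec (P := (· ∈ blockStarts K)) (Nat.zero_le i) (mem_insert_self 0 _)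

theorem le_blockStart (hj : j ∈ blockStarts K) (hji : j ≤ i) : j ≤ blockStart K i :=
  Nat.le_findGreatest hji hj

theorem blockStart_eq_of_mem_Icc (hj : blockStart K i ≤ j) (hji : j ≤ i) :
    blockStart K j = blockStart K i :=
  le_antisymm (le_blockStart (blockStart_mem K j) ((blockStart_le K j).trans hji))
    (le_blockStart (blockStart_mem K i) hj)

theorem succ_le_blockStart (hj : j ∈ K) (hji : j < i) : j + 1 ≤ blockStart K i :=
  le_blockStart (mem_insert_of_mem (mem_image_of_mem _ hj)) hji

theorem exists_le_lt_of_blockStart_lt (h : blockStart K i < blockStart K j) :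
    ∃ k ∈ K, i ≤ k ∧ k < j := by
  rcases mem_insert.mp (blockStart_mem K j) with h0 | hmem
  · omega
  · obtain ⟨k, hk, hkj⟩ := mem_image.mp hmem
    refine ⟨k, hk, not_lt.mp fun hki => ?_, by have := blockStart_le K j; omega⟩
    exact (succ_le_blockStart hk hki).not_gt (hkj ▸ h)

theorem IsCut.insert_straddling (hK : IsCut K M) (j x : ℕ) :
    IsCut (insert j K) (straddling M j x) := by
  refine forall_mem_insert .. |>.mpr ⟨fun e he f hf => ?_, fun k hk e he f hf => ?_⟩
  · exact (mem_filter.mp he).2.1.trans_le (mem_filter.mp hf).2.2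
  · exact hK k hk e (mem_filter.mp he).1 f (mem_filter.mp hf).1

theorem IsCut.subset (hK : IsCut K M) (hNM : N ⊆ M) : IsCut K N :=
  fun j hj e he f hf => hK j hj e (hNM he) f (hNM hf)

theorem isSeparated_of_isAntichain (hM : IsAntichain (Conflict d K) (M : Set (Finset ℕ))) :
    IsSeparated d K M := by
  intro e he f hf i hi hef
  by_contra! hfe
  obtain ⟨j, hij, hji, hj⟩ := exists_lt_le_succ (blockStart_le K i) hef hfe
  have hjd : j ∈ range d := mem_range.mpr (hji.trans_le hi)
  refine hM he hf (fun h => hef.ne (by rw [h])) ⟨j, mem_sdiff.mpr ⟨hjd, ?_⟩, ?_⟩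
  · exact fun hjK => (succ_le_blockStart hjK hji).not_gt (Nat.lt_succ_of_le hij)
  · rwa [blockStart_eq_of_mem_Icc hij hji.le]

theorem IsCut.vertex_lt_vertex (hK : IsCut K M) (hM : IsMatching (d + 1) M) {e f : Finset ℕ}
    (he : e ∈ M) (hf : f ∈ M) (hj : j ≤ d) (hij : blockStart K i < blockStart K j) :
    vertex e i < vertex f j := by
  obtain ⟨k, hk, hik, hkj⟩ := exists_le_lt_of_blockStart_lt hij
  calc vertex e i ≤ vertex e k := vertex_le_vertex hik (by rw [hM.1 e he]; omega)
    _ < vertex f (k + 1) := hK k hk e he f hf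
    _ ≤ vertex f j := vertex_le_vertex hkj (by rw [hM.1 f hf]; omega)

theorem IsCut.vertex_lt_vertex_iff (hK : IsCut K M) (hM : IsMatching (d + 1) M)
    (hsep : IsSeparated d K M) {e f : Finset ℕ} (he : e ∈ M) (hf : f ∈ M) (hef : e ≠ f)
    (hi : i ≤ d) (hj : j ≤ d) :
    vertex e i < vertex f j ↔ blockStart K i < blockStart K j ∨
      blockStart K i = blockStart K j ∧
        vertex e (blockStart K i) < vertex f (blockStart K i) := by
  rcases lt_trichotomy (blockStart K i) (blockStart K j) with hij | hij | hij
  · simp [hij, hK.vertex_lt_vertex hM he hf hj hij]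
  · have hsi := blockStart_le K i
    have hsj := blockStart_le K j
    have he_le : vertex e (blockStart K i) ≤ vertex e i :=
      vertex_le_vertex hsi (by rw [hM.1 e he]; omega)
    have hf_le : vertex f (blockStart K j) ≤ vertex f j :=
      vertex_le_vertex hsj (by rw [hM.1 f hf]; omega)
    have hef_sep := hsep e he f hf i hi
    have hfe_sep := hsep f hf e he j hj
    have hne := hM.vertex_ne he hf hef (i := blockStart K i) (j := blockStart K i)
      (by omega) (by omega)
    rw [← hij] at hf_le hfe_sep
    simp only [hij, lt_irrefl, false_or, true_and]
    rw [← hij]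
    omega
  · simp [hij.not_gt, hij.ne', (hK.vertex_lt_vertex hM hf he hi hij).le]

theorem IsCut.hasTwins_of_blockStarts (hK : IsCut K M) (hM : IsMatching (d + 1) M)
    (hsep : IsSeparated d K M) {ι : Type*} [Fintype ι] (a b : ι → Finset ℕ) (ha : ∀ p, a p ∈ M)
    (hb : ∀ p, b p ∈ M) (ha_inj : Function.Injective a) (hb_inj : Function.Injective b)
    (hab : ∀ p q, a p ≠ b q)
    (hord : ∀ s ∈ blockStarts K, ∀ p q,
      (vertex (a p) s < vertex (a q) s ↔ vertex (b p) s < vertex (b q) s)) :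
    HasTwins M (Fintype.card ι) := by
  refine hasTwins_of_vertex_lt_iff hM a b ha hb ha_inj hab fun p q hpq i hi j hj => ?_
  rw [Nat.lt_succ_iff] at hi hj
  rw [hK.vertex_lt_vertex_iff hM hsep (ha p) (ha q) (ha_inj.ne hpq) hi hj,
    hK.vertex_lt_vertex_iff hM hsep (hb p) (hb q) (hb_inj.ne hpq) hi hj,
    hord _ (blockStart_mem K i) p q]

theorem IsCut.hasTwins_of_isSeparated (hK : IsCut K M) (hM : IsMatching (d + 1) M)
    (hKd : K ⊆ range d) (hsep : IsSeparated d K M) (hκ : #K = κ + 1) (hS : S ^ 2 ^ κ ≤ #M) :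
    HasTwins M (permTau S) := by
  obtain ⟨k, hk⟩ : K.Nonempty := card_pos.mp (by omega)
  obtain ⟨M', hM'M, hSM', hmono⟩ := exists_forall_monovaryOn_or_antivaryOn
    (fun j e => vertex e (j + 1)) (vertex · 0) S (K.erase k) M
    (by rwa [card_erase_of_mem hk, hκ, Nat.add_sub_cancel])
  obtain ⟨N, hNM', rfl⟩ := exists_subset_card_eq hSM'
  have hN : IsMatching (d + 1) N := hM.subset (hNM'.trans hM'M)
  have hinj : ∀ j ∈ K, Set.InjOn (fun e => vertex e (j + 1)) (N : Set (Finset ℕ)) := fun j hj =>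
    hN.injOn_vertex (by have := mem_range.mp (hKd hj); omega)
  have hinj₀ : Set.InjOn (vertex · 0) (N : Set (Finset ℕ)) := hN.injOn_vertex d.succ_pos
  obtain ⟨a, b, ha, hb, ha_inj, hb_inj, hab, hord₀, hordk⟩ :=
    exists_twins_of_injOn N (vertex · 0) (fun e => vertex e (k + 1)) hinj₀ (hinj k hk)
  refine Fintype.card_fin (permTau #N) ▸ (hK.hasTwins_of_blockStarts hM hsep a b
    (fun p => hM'M (hNM' (ha p))) (fun p => hM'M (hNM' (hb p))) ha_inj hb_inj hab ?_)
  refine forall_mem_insert .. |>.mpr ⟨hord₀, forall_mem_image.mpr fun j hj p q => ?_⟩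
  rcases eq_or_ne j k with rfl | hjk
  · exact hordk p q
  rcases hmono j (mem_erase.mpr ⟨hjk, hj⟩) with H | H
  · have hlt {x y : Finset ℕ} := lt_iff_lt_of_monovaryOn (x := x) (y := y)
      (H.subset (coe_subset.mpr hNM')) (hinj j hj) hinj₀
    exact (hlt (ha p) (ha q)).trans ((hord₀ p q).trans (hlt (hb p) (hb q)).symm)
  · have hlt {x y : Finset ℕ} := lt_iff_lt_of_antivaryOn (x := x) (y := y)
      (H.subset (coe_subset.mpr hNM')) (hinj j hj) hinj₀
    exact (hlt (ha p) (ha q)).trans ((hord₀ q p).trans (hlt (hb p) (hb q)).symm)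

theorem straddling_subset (M : Finset (Finset ℕ)) (j x : ℕ) : straddling M j x ⊆ M :=
  filter_subset _ _

open scoped Nat in
/-- The number of edges that suffices for twins of size `permTau S` in the presence of `κ + 1`
cuts and `g` other gaps. The double factorial collects the losses `2 * g + 1` in passing to an
independent set of the conflict digraph. -/
def edgesNeeded (S κ g : ℕ) : ℕ := (2 * g + 1)‼ * S ^ (2 ^ κ * (2 ^ (g + 1) - 1))

theorem edgesNeeded_succ (S κ g : ℕ) :
    edgesNeeded S κ (g + 1) = (2 * g + 3) * S ^ 2 ^ κ * edgesNeeded S (κ + 1) g := by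
  have hexp : 2 ^ κ * (2 ^ (g + 2) - 1) = 2 ^ κ + 2 ^ (κ + 1) * (2 ^ (g + 1) - 1) := by
    have := Nat.one_le_two_pow (n := g + 1)
    zify [this, Nat.one_le_two_pow (n := g + 2)]
    ring
  rw [edgesNeeded, edgesNeeded, hexp, pow_add, mul_add_one 2 g, add_right_comm,
    Nat.doubleFactorial_add_two]
  ring

theorem exists_isSeparated_of_card_straddling_le {g T : ℕ} (hg : #(range d \ K) = g) (hT : 0 < T)
    (hM : ∀ j ∈ range d \ K, ∀ x, #(straddling M j x) ≤ T) :
    ∃ N ⊆ M, #M ≤ (2 * g + 1) * T * #N ∧ IsSeparated d K N := by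
  classical
  have hdeg : ∀ f ∈ M, #{e ∈ M | Conflict d K e f} ≤ g * T := fun f _ => by
    have hsub : {e ∈ M | Conflict d K e f} ⊆
        (range d \ K).biUnion fun j => straddling M j (vertex f (blockStart K j)) := by
      intro e he
      obtain ⟨heM, j, hj, hef⟩ := mem_filter.mp he
      exact mem_biUnion.mpr ⟨j, hj, mem_filter.mpr ⟨heM, hef⟩⟩
    exact hg ▸ (card_le_card hsub).trans (card_biUnion_le_card_mul _ _ _ fun j hj => hM j hj _)
  obtain ⟨N, hNM, hcard, hN⟩ := exists_isAntichain_of_card_filter_le _ (g * T) M hdeg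
  refine ⟨N, hNM, hcard.trans (Nat.mul_le_mul_right _ ?_), isSeparated_of_isAntichain hN⟩
  linarith

theorem IsCut.hasTwins_of_edgesNeeded_le {g : ℕ} (hK : IsCut K M) (hM : IsMatching (d + 1) M)
    (hKd : K ⊆ range d) (hκ : #K = κ + 1) (hg : #(range d \ K) = g)
    (hcard : edgesNeeded S κ g ≤ #M) : HasTwins M (permTau S) := by
  induction g generalizing κ K M with
  | zero =>
    refine hK.hasTwins_of_isSeparated hM hKd (isSeparated_of_isAntichain ?_) hκ
      (by simpa [edgesNeeded] using hcard)
    rintro e - f - - ⟨j, hj, -⟩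
    simp [card_eq_zero.mp hg] at hj
  | succ g ih =>
    rw [edgesNeeded_succ] at hcard
    set T := edgesNeeded S (κ + 1) g
    by_cases hcut : ∃ j ∈ range d \ K, ∃ x, T ≤ #(straddling M j x)
    · obtain ⟨j, hj, x, hjx⟩ := hcut
      have hjK : j ∉ K := (mem_sdiff.mp hj).2
      refine (ih (hK.insert_straddling j x) (hM.subset (straddling_subset M j x))
        (insert_subset (mem_sdiff.mp hj).1 hKd) (by rw [card_insert_of_notMem hjK, hκ]) ?_
        hjx).mono (straddling_subset M j x)
      rw [sdiff_insert, card_erase_of_mem hj, hg, Nat.add_sub_cancel]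
    · push Not at hcut
      have hT : 0 < T := by
        obtain ⟨j, hj⟩ : (range d \ K).Nonempty := card_pos.mp (by omega)
        exact (Nat.zero_le _).trans_lt (hcut j hj 0)
      obtain ⟨N, hNM, hMN, hN⟩ := exists_isSeparated_of_card_straddling_le hg hT
        fun j hj x => (hcut j hj x).le
      refine ((hK.subset hNM).hasTwins_of_isSeparated (hM.subset hNM) hKd hN hκ ?_).mono hNM
      have hpos : 0 < (2 * g + 3) * T := by positivity
      refine Nat.le_of_mul_le_mul_left ?_ hpos
      linarith

end Cut

section Crossing

open Finset

variable {S g x : ℕ} {M : Finset (Finset ℕ)}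

/-- The edges of `M` all of whose vertices are less than `x`. -/
def edgesBelow (M : Finset (Finset ℕ)) (x : ℕ) : Finset (Finset ℕ) := {e ∈ M | ∀ v ∈ e, v < x}

/-- The edges of `M` all of whose vertices are at least `x`. -/
def edgesFrom (M : Finset (Finset ℕ)) (x : ℕ) : Finset (Finset ℕ) := {e ∈ M | ∀ v ∈ e, x ≤ v}

/-- The edges of `M` that have vertices on both sides of the point just before `x`. -/
def crossing (M : Finset (Finset ℕ)) (x : ℕ) : Finset (Finset ℕ) :=
  {e ∈ M | (∃ v ∈ e, v < x) ∧ ∃ v ∈ e, x ≤ v}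

theorem exists_mem_straddling_of_mem_crossing {d : ℕ} (hM : IsMatching (d + 1) M)
    {e : Finset ℕ} (he : e ∈ crossing M x) : ∃ j < d, e ∈ straddling M j x := by
  obtain ⟨heM, ⟨v, hv, hvx⟩, w, hw, hxw⟩ := mem_filter.mp he
  obtain ⟨s, hs, rfl⟩ := exists_vertex_eq hv
  obtain ⟨t, ht, rfl⟩ := exists_vertex_eq hw
  have hst : s ≤ t := ((vertex_lt_vertex_iff hs ht).mp (hvx.trans_le hxw)).le
  obtain ⟨j, -, hjt, hj⟩ := exists_lt_le_succ hst hvx hxw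
  exact ⟨j, by rw [hM.1 e heM] at ht; omega, mem_filter.mpr ⟨heM, hj⟩⟩

theorem hasTwins_of_edgesNeeded_le_card_crossing (hM : IsMatching (g + 2) M)
    (hcard : (g + 1) * edgesNeeded S 0 g ≤ #(crossing M x)) : HasTwins M (permTau S) := by
  obtain ⟨j, hj, hjx⟩ : ∃ j ∈ range (g + 1), edgesNeeded S 0 g ≤ #(straddling M j x) := by
    refine exists_le_of_sum_le nonempty_range_add_one ?_
    calc ∑ _ ∈ range (g + 1), edgesNeeded S 0 g ≤ #(crossing M x) := by simpa using hcard
      _ ≤ #((range (g + 1)).biUnion fun j => straddling M j x) := card_le_card fun e he => by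
        simpa using exists_mem_straddling_of_mem_crossing hM he
      _ ≤ ∑ j ∈ range (g + 1), #(straddling M j x) := card_biUnion_le
  have hcut : IsCut {j} (straddling M j x) := by
    simpa using IsCut.insert_straddling (K := ∅) (M := M) (by simp [IsCut]) j x
  refine (hcut.hasTwins_of_edgesNeeded_le (hM.subset (straddling_subset M j x))
    (singleton_subset_iff.mpr hj) (card_singleton j) ?_ hjx).mono (straddling_subset M j x)
  rw [card_sdiff_of_subset (singleton_subset_iff.mpr hj), card_range, card_singleton,
    Nat.add_sub_cancel]

end Crossing

section Splitting

open Finset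

variable {r : ℕ} {M : Finset (Finset ℕ)}

theorem IsMatching.nonempty (hM : IsMatching r M) (hr : 0 < r) {e : Finset ℕ} (he : e ∈ M) :
    e.Nonempty :=
  card_pos.mp (hM.1 e he ▸ hr)

theorem edgesBelow_subset (M : Finset (Finset ℕ)) (x : ℕ) : edgesBelow M x ⊆ M :=
  filter_subset _ _

theorem edgesFrom_subset (M : Finset (Finset ℕ)) (x : ℕ) : edgesFrom M x ⊆ M :=
  filter_subset _ _

theorem IsMatching.card_edgesBelow_add (hM : IsMatching r M) (hr : 0 < r) (x : ℕ) :
    #(edgesBelow M x) + (#(edgesFrom M x) + #(crossing M x)) = #M := by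
  rw [← card_filter_add_card_filter_not (s := M) (fun e => ∀ v ∈ e, v < x),
    ← card_filter_add_card_filter_not (s := {e ∈ M | ¬∀ v ∈ e, v < x}) (fun e => ∀ v ∈ e, x ≤ v),
    filter_filter, filter_filter, edgesBelow, edgesFrom, crossing]
  congr 3
  · refine filter_congr fun e he => ⟨fun h => ⟨fun h' => ?_, h⟩, And.right⟩
    obtain ⟨v, hv⟩ := hM.nonempty hr he
    exact (h v hv).not_gt (h' v hv)
  · refine filter_congr fun e _ => ?_
    push Not
    exact and_comm

theorem IsMatching.card_edgesBelow_succ_le (hM : IsMatching r M) (x : ℕ) :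
    #(edgesBelow M (x + 1)) ≤ #(edgesBelow M x) + 1 := by
  have hsub : edgesBelow M (x + 1) ⊆ edgesBelow M x ∪ {e ∈ M | x ∈ e} := by
    intro e he
    obtain ⟨heM, hex⟩ := mem_filter.mp he
    by_cases hxe : x ∈ e
    · exact mem_union_right _ (mem_filter.mpr ⟨heM, hxe⟩)
    · exact mem_union_left _ (mem_filter.mpr ⟨heM, fun v hv =>
        lt_of_le_of_ne (Nat.lt_succ_iff.mp (hex v hv)) (ne_of_mem_of_not_mem hv hxe)⟩)
  have hone : #{e ∈ M | x ∈ e} ≤ 1 := card_le_one.mpr fun e he f hf => by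
    simp only [mem_filter] at he hf
    by_contra hef
    exact disjoint_left.mp (hM.2 e he.1 f hf.1 hef) he.2 hf.2
  grw [hsub, card_union_le, hone]

theorem IsMatching.exists_card_edgesBelow_eq (hM : IsMatching r M) (hr : 0 < r) {m : ℕ}
    (hm : m ≤ #M) : ∃ x, #(edgesBelow M x) = m := by
  have hbot : #(edgesBelow M 0) = 0 := by
    refine card_eq_zero.mpr (filter_eq_empty_iff.mpr fun e he h => ?_)
    obtain ⟨v, hv⟩ := hM.nonempty hr he
    exact Nat.not_lt_zero v (h v hv)
  have htop : edgesBelow M ((mSupport M).sup id + 1) = M := filter_true_of_mem fun e he v hv =>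
    Nat.lt_succ_of_le (le_sup (f := id) (subset_mSupport he hv))
  rcases m.eq_zero_or_pos with rfl | hm₀
  · exact ⟨0, hbot⟩
  · obtain ⟨x, -, -, hlt, hle⟩ := exists_lt_le_succ (u := fun x => #(edgesBelow M x))
      (Nat.zero_le _) (by rwa [hbot]) (by rwa [htop])
    exact ⟨x + 1, le_antisymm ((hM.card_edgesBelow_succ_le x).trans hlt) hle⟩

theorem IsMatching.exists_balanced_split (hM : IsMatching r M) (hr : 0 < r) (hcard : 12 ≤ #M)
    (hcross : ∀ x, 6 * #(crossing M x) < #M) :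
    ∃ x, 3 * #M ≤ 8 * #(edgesBelow M x) ∧ 3 * #M ≤ 8 * #(edgesFrom M x) := by
  obtain ⟨x, hx⟩ := hM.exists_card_edgesBelow_eq hr (m := (3 * #M + 7) / 8) (by omega)
  have := hM.card_edgesBelow_add hr x
  have := hcross x
  exact ⟨x, by omega, by omega⟩

theorem IsMatching.twinMax_edgesBelow_add_le (hM : IsMatching r M) (hr : 0 < r) (x : ℕ) :
    twinMax (edgesBelow M x) + twinMax (edgesFrom M x) ≤ twinMax M := by
  refine (twinMax_add_le_twinMax_union (x := x) (fun v hv => ?_) (fun v hv => ?_) fun e he =>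
    hM.nonempty hr (edgesBelow_subset M x he)).trans
    (twinMax_mono (union_subset (edgesBelow_subset M x) (edgesFrom_subset M x)))
  · obtain ⟨e, he, hve⟩ := mem_mSupport.mp hv
    exact (mem_filter.mp he).2 v hve
  · obtain ⟨e, he, hve⟩ := mem_mSupport.mp hv
    exact (mem_filter.mp he).2 v hve

theorem one_le_twinMax (hM : IsMatching r M) (hcard : 2 ≤ #M) : 1 ≤ twinMax M :=
  (hasTwins_one hM hcard).le_twinMax

theorem one_le_two_mul_rpow {γ : ℝ} (hγ : γ ≤ 2 / 3) : 1 ≤ 2 * (3 / 8 : ℝ) ^ γ := by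
  have hcube : (1 / 2 : ℝ) ≤ (3 / 8) ^ (2 / 3 : ℝ) := by
    refine le_of_pow_le_pow_left₀ three_ne_zero (by positivity) ?_
    rw [← Real.rpow_mul_natCast (by norm_num)]
    norm_num
  linarith [Real.rpow_le_rpow_of_exponent_ge (x := 3 / 8) (by norm_num) (by norm_num) hγ]

theorem mul_rpow_card_le_twinMax (hr : 0 < r) {A γ : ℝ} (hA : 0 ≤ A) (hγ₀ : 0 ≤ γ)
    (hγ : γ ≤ 2 / 3) (hA₁ : A * 12 ^ γ ≤ 1)
    (hcross : ∀ N, IsMatching r N → 2 ≤ #N → ∀ x, #N ≤ 6 * #(crossing N x) →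
      A * (#N : ℝ) ^ γ ≤ twinMax N)
    (hM : IsMatching r M) (hcard : 2 ≤ #M) : A * (#M : ℝ) ^ γ ≤ twinMax M := by
  induction hn : #M using Nat.strong_induction_on generalizing M with
  | _ n ih =>
  subst hn
  rcases lt_or_ge #M 12 with h12 | h12
  · calc A * (#M : ℝ) ^ γ ≤ A * 12 ^ γ := by gcongr; exact_mod_cast h12.le
      _ ≤ 1 := hA₁
      _ ≤ twinMax M := by exact_mod_cast one_le_twinMax hM hcard
  by_cases hx : ∃ x, #M ≤ 6 * #(crossing M x)
  · obtain ⟨x, hx⟩ := hx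
    exact hcross M hM hcard x hx
  push Not at hx
  obtain ⟨x, hbelow, hfrom⟩ := hM.exists_balanced_split hr h12 hx
  have hsum := hM.card_edgesBelow_add hr x
  have hhalf : ∀ N ⊆ M, 3 * #M ≤ 8 * #N → #N < #M →
      A * ((3 / 8) ^ γ * (#M : ℝ) ^ γ) ≤ twinMax N := fun N hNM hN hlt => by
    refine le_trans ?_ (ih #N hlt (hM.subset hNM) (by omega) rfl)
    rw [← Real.mul_rpow (by norm_num) (by positivity)]
    have : (3 * #M : ℝ) ≤ 8 * #N := by exact_mod_cast hN
    gcongr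
    linarith
  calc A * (#M : ℝ) ^ γ ≤ A * (#M : ℝ) ^ γ * (2 * (3 / 8) ^ γ) :=
        le_mul_of_one_le_right (by positivity) (one_le_two_mul_rpow hγ)
    _ = A * ((3 / 8) ^ γ * (#M : ℝ) ^ γ) + A * ((3 / 8) ^ γ * (#M : ℝ) ^ γ) := by ring
    _ ≤ twinMax (edgesBelow M x) + twinMax (edgesFrom M x) :=
        add_le_add (hhalf _ (edgesBelow_subset M x) hbelow (by omega))
          (hhalf _ (edgesFrom_subset M x) hfrom (by omega))
    _ ≤ twinMax M := by exact_mod_cast hM.twinMax_edgesBelow_add_le hr x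

end Splitting

section Constants

open scoped Nat

theorem two_mul_add_three_le_pow {g : ℕ} (hg : 1 ≤ g) :
    2 * (g : ℝ) + 3 ≤ (3 / 2) ^ 2 ^ (g + 1) := by
  obtain ⟨m, rfl⟩ := Nat.exists_eq_add_of_le' hg
  have hm : (m : ℝ) + 1 ≤ 2 ^ m := by exact_mod_cast Nat.lt_two_pow_self (n := m)
  calc 2 * ((m + 1 : ℕ) : ℝ) + 3 ≤ 1 + (2 ^ m : ℕ) * (65 / 16 : ℝ) := by
        push_cast
        linarith
    _ ≤ (1 + 65 / 16) ^ 2 ^ m := one_add_mul_le_pow (by norm_num) _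
    _ = (3 / 2) ^ 2 ^ (m + 1 + 1) := by
        rw [show 2 ^ (m + 1 + 1) = 4 * 2 ^ m by ring, pow_mul]
        norm_num

theorem two_pow_sub_one_succ (k : ℕ) : 2 ^ (k + 1) - 1 = 2 ^ k - 1 + 2 ^ k := by
  have := Nat.one_le_two_pow (n := k)
  omega

theorem doubleFactorial_le_pow (g : ℕ) :
    ((2 * g + 1)‼ : ℝ) ≤ (3 / 2) ^ (2 ^ (g + 1) - 1) := by
  rcases g.eq_zero_or_pos with rfl | hg
  · norm_num
  induction g, hg using Nat.le_induction with
  | base => norm_num [Nat.doubleFactorial]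
  | succ g hg ih =>
    rw [two_pow_sub_one_succ, pow_add, mul_add_one 2 g, add_right_comm,
      Nat.doubleFactorial_add_two, mul_comm, Nat.cast_mul]
    gcongr
    exact_mod_cast two_mul_add_three_le_pow hg

theorem succ_mul_doubleFactorial_mul_pow_le (g : ℕ) :
    (g + 1 : ℝ) * (2 * g + 1)‼ * (4 / 3 : ℝ) ^ (2 ^ (g + 1) - 1) ≤
      (g + 2 : ℝ) * 2 ^ (2 ^ (g + 1) - 1) := by
  calc (g + 1 : ℝ) * (2 * g + 1)‼ * (4 / 3 : ℝ) ^ (2 ^ (g + 1) - 1)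
      ≤ (g + 2 : ℝ) * (3 / 2 : ℝ) ^ (2 ^ (g + 1) - 1) * (4 / 3 : ℝ) ^ (2 ^ (g + 1) - 1) := by
        gcongr
        · norm_num
        · exact doubleFactorial_le_pow g
    _ = (g + 2 : ℝ) * 2 ^ (2 ^ (g + 1) - 1) := by
        rw [mul_assoc, ← mul_pow]
        norm_num

theorem etaExp_succ (g : ℕ) : etaExp (g + 1) = (↑(2 ^ (g + 1) - 1 : ℕ))⁻¹ := by
  rw [etaExp, one_div, Nat.cast_pred (by positivity), Nat.cast_pow, Nat.cast_ofNat]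

theorem etaExp_nonneg (s : ℕ) : 0 ≤ etaExp s :=
  one_div_nonneg.mpr (sub_nonneg.mpr (one_le_pow₀ one_le_two))

theorem etaExp_succ_le_one (g : ℕ) : etaExp (g + 1) ≤ 1 := by
  rw [etaExp_succ]
  exact Nat.cast_inv_le_one _

end Constants

section LowerBound

open Finset
open scoped Nat

variable {α β c : ℝ} {g x : ℕ} {M : Finset (Finset ℕ)}

theorem mul_three_rpow_le_one (htau : ∀ n : ℕ, 2 ≤ n → β * (n : ℝ) ^ α ≤ permTau n) :
    β * 3 ^ α ≤ 1 := by
  have htau₃ : permTau 3 ≤ 1 := by linarith [two_mul_permTau_le 3]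
  calc β * 3 ^ α ≤ permTau 3 := by exact_mod_cast htau 3 (by norm_num)
    _ ≤ 1 := by exact_mod_cast htau₃

theorem mul_rpow_le_twinMax_of_le_card_crossing (hα : 0 ≤ α) (hβ : 0 ≤ β)
    (htau : ∀ n : ℕ, 2 ≤ n → β * (n : ℝ) ^ α ≤ permTau n) (hM : IsMatching (g + 2) M)
    (hcard : 2 ≤ #M) {s : ℝ} (hs : 0 ≤ s)
    (hcross : (g + 1) * (2 * g + 1)‼ * (4 / 3 * s) ^ (2 ^ (g + 1) - 1) ≤ #(crossing M x)) :
    β * s ^ α ≤ twinMax M := by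
  rcases le_or_gt s 3 with hs₃ | hs₃
  · calc β * s ^ α ≤ β * 3 ^ α := by gcongr
      _ ≤ 1 := mul_three_rpow_le_one htau
      _ ≤ twinMax M := by exact_mod_cast one_le_twinMax hM hcard
  -- As `3 < s`, rounding up to the integer that `htau` requires costs a factor of at most `4 / 3`.
  have hceil : (⌈s⌉₊ : ℝ) ≤ 4 / 3 * s := by linarith [Nat.ceil_lt_add_one hs]
  have hceil₂ : 2 ≤ ⌈s⌉₊ := by
    have : (2 : ℝ) ≤ ⌈s⌉₊ := by linarith [Nat.le_ceil s]
    exact_mod_cast this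
  have hneeded : (g + 1) * edgesNeeded ⌈s⌉₊ 0 g ≤ #(crossing M x) := by
    rw [← Nat.cast_le (α := ℝ)]
    refine le_trans ?_ hcross
    rw [edgesNeeded, pow_zero, one_mul]
    push_cast
    rw [← mul_assoc]
    gcongr
  calc β * s ^ α ≤ β * (⌈s⌉₊ : ℝ) ^ α := by gcongr; exact Nat.le_ceil s
    _ ≤ permTau ⌈s⌉₊ := htau _ hceil₂
    _ ≤ twinMax M := by
      exact_mod_cast (hasTwins_of_edgesNeeded_le_card_crossing hM hneeded).le_twinMax

theorem mul_rpow_le_twinMax_of_card_le_card_crossing (hα : 0 ≤ α) (hβ : 0 ≤ β)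
    (htau : ∀ n : ℕ, 2 ≤ n → β * (n : ℝ) ^ α ≤ permTau n) (hc : 0 < c)
    (hcg : (g + 1) * (2 * g + 1)‼ * (4 / 3) ^ (2 ^ (g + 1) - 1) ≤
      (g + 2) * c ^ (2 ^ (g + 1) - 1))
    (hM : IsMatching (g + 2) M) (hcard : 2 ≤ #M) (hcross : #M ≤ 6 * #(crossing M x)) :
    β * c ^ (-α) * (#M / (6 * (g + 2))) ^ (α * etaExp (g + 1)) ≤ twinMax M := by
  set q : ℝ := #M / (6 * (g + 2)) with hq
  have hq₀ : 0 ≤ q := by positivity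
  have hE : 2 ^ (g + 1) - 1 ≠ 0 := by
    have := Nat.one_lt_two_pow g.succ_ne_zero
    omega
  have hroot : (q ^ etaExp (g + 1)) ^ (2 ^ (g + 1) - 1) = q := by
    rw [etaExp_succ, Real.rpow_inv_natCast_pow hq₀ hE]
  calc β * c ^ (-α) * q ^ (α * etaExp (g + 1)) = β * (q ^ etaExp (g + 1) / c) ^ α := by
        rw [Real.div_rpow (by positivity) hc.le, mul_comm α, Real.rpow_mul hq₀,
          Real.rpow_neg hc.le]
        ring
    _ ≤ twinMax M := by
        refine mul_rpow_le_twinMax_of_le_card_crossing hα hβ htau hM hcard (by positivity) ?_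
          (x := x)
        calc (g + 1 : ℝ) * (2 * g + 1)‼ * (4 / 3 * (q ^ etaExp (g + 1) / c)) ^ (2 ^ (g + 1) - 1)
            = (g + 1) * (2 * g + 1)‼ * (4 / 3) ^ (2 ^ (g + 1) - 1) *
                (q / c ^ (2 ^ (g + 1) - 1)) := by
              rw [mul_pow, div_pow (q ^ etaExp (g + 1)), hroot]
              ring
          _ ≤ (g + 2) * c ^ (2 ^ (g + 1) - 1) * (q / c ^ (2 ^ (g + 1) - 1)) := by gcongr
          _ = #M / 6 := by
              rw [hq]
              field_simp
          _ ≤ #(crossing M x) := by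
              have : (#M : ℝ) ≤ 6 * #(crossing M x) := by exact_mod_cast hcross
              linarith

theorem mul_rpow_le_twinMax (hα₀ : 0 ≤ α) (hα : α ≤ 2 / 3) (hβ : 0 ≤ β)
    (htau : ∀ n : ℕ, 2 ≤ n → β * (n : ℝ) ^ α ≤ permTau n) (hc : 1 ≤ c)
    (hcg : (g + 1) * (2 * g + 1)‼ * (4 / 3) ^ (2 ^ (g + 1) - 1) ≤
      (g + 2) * c ^ (2 ^ (g + 1) - 1))
    (hM : IsMatching (g + 2) M) (hcard : 2 ≤ #M) :
    β * c ^ (-α) * (#M / (6 * (g + 2))) ^ (α * etaExp (g + 1)) ≤ twinMax M := by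
  set γ := α * etaExp (g + 1)
  have hγ₀ : 0 ≤ γ := mul_nonneg hα₀ (etaExp_nonneg _)
  have hγ : γ ≤ 2 / 3 := (mul_le_of_le_one_right hα₀ (etaExp_succ_le_one g)).trans hα
  have hfactor : ∀ n : ℕ, β * c ^ (-α) * ((n : ℝ) / (6 * (g + 2))) ^ γ =
      β * c ^ (-α) / (6 * (g + 2)) ^ γ * (n : ℝ) ^ γ := fun n => by
    rw [Real.div_rpow (by positivity) (by positivity)]
    ring
  rw [hfactor]
  refine mul_rpow_card_le_twinMax (by omega) (by positivity) hγ₀ hγ ?_ (fun N hN hN₂ x hx => ?_)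
    hM hcard
  · calc β * c ^ (-α) / (6 * (g + 2)) ^ γ * 12 ^ γ
        = β * (c ^ (-α) * (12 / (6 * (g + 2))) ^ γ) := by
          rw [Real.div_rpow (by positivity) (by positivity)]
          ring
      _ ≤ β * (1 * 1) := by
          gcongr
          · exact Real.rpow_le_one_of_one_le_of_nonpos hc (by linarith)
          · refine Real.rpow_le_one (by positivity) ?_ hγ₀
            rw [div_le_one (by positivity)]
            linarith [(Nat.cast_nonneg g : (0 : ℝ) ≤ g)]
      _ ≤ β * 3 ^ α := by
          gcongr
          simpa using Real.one_le_rpow (by norm_num) hα₀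
      _ ≤ 1 := mul_three_rpow_le_one htau
  · rw [← hfactor]
    exact mul_rpow_le_twinMax_of_card_le_card_crossing hα₀ hβ htau (by linarith) hcg hN hN₂ hx

theorem exists_isOrderedMatching {r : ℕ} (hr : r ≠ 0) (n : ℕ) : ∃ M, IsOrderedMatching r n M := by
  have hcard : n * r + 0 * (r + 1) = #(Icc 1 (r * n)) := by
    rw [Nat.card_Icc, Nat.add_sub_cancel, zero_mul, add_zero, mul_comm]
  let P := (⊥ : Finpartition (Icc 1 (r * n))).equitabilise hcard
  refine ⟨P.parts, ⟨fun e he => ?_, fun e he f hf hef => P.disjoint he hf hef⟩,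
    Finpartition.card_parts_equitabilise _ hcard hr, P.sup_parts⟩
  refine (Finpartition.card_eq_of_mem_parts_equitabilise he).resolve_right fun h => ?_
  have hempty := card_eq_zero.mp (Finpartition.card_filter_equitabilise_big ⊥ hcard)
  exact notMem_empty e (hempty ▸ mem_filter.mpr ⟨he, h⟩)

theorem le_minTwins {r n : ℕ} (hr : r ≠ 0) {b : ℝ}
    (hb : ∀ M, IsOrderedMatching r n M → b ≤ twinMax M) : b ≤ minTwins r n := by
  obtain ⟨M, hM⟩ := exists_isOrderedMatching hr n
  obtain ⟨N, hN, hNt⟩ := Nat.sInf_mem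
    (s := {t | ∃ M, IsOrderedMatching r n M ∧ twinMax M = t}) ⟨twinMax M, M, hM, rfl⟩
  rw [minTwins, ← hNt]
  exact hb N hN

theorem recursiveBound_le {B : ℕ → ℝ} (hB2 : B 2 = β)
    (hBrec : ∀ r : ℕ, 3 ≤ r → B r = sInf (insert (β * (2 : ℝ) ^ (-α))
      {x : ℝ | ∃ p : ℕ, 2 ≤ p ∧ p ≤ r - 2 ∧
        x = B p * (12 * (r : ℝ)) ^ (-(α * etaExp (p - 1)))})) {r : ℕ} (hr : 2 ≤ r) :
    B r ≤ if r = 2 then β else β * 2 ^ (-α) := by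
  split_ifs with h
  · exact (h ▸ hB2).le
  rw [hBrec r (by omega)]
  refine csInf_le (Set.Finite.bddBelow (.insert _ ?_)) (Set.mem_insert _ _)
  refine ((Set.finite_Iic (r - 2)).image
    fun p => B p * (12 * (r : ℝ)) ^ (-(α * etaExp (p - 1)))).subset ?_
  rintro x ⟨p, -, hp, rfl⟩
  exact ⟨p, hp, rfl⟩

end LowerBound

theorem corollary_recursive_bound_general (α β : ℝ) (hα₀ : 0 ≤ α) (hα : α ≤ 2 / 3) (hβ : 0 ≤ β)
    (htau : ∀ n : ℕ, 2 ≤ n → β * (n : ℝ) ^ α ≤ permTau n) (r : ℕ) (hr : 2 ≤ r) (n : ℕ)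
    (hn : 2 ≤ n) :
    (if r = 2 then β else β * 2 ^ (-α)) * ((n : ℝ) / (6 * r)) ^ (α * etaExp (r - 1)) ≤
      minTwins r n := by
  obtain ⟨g, rfl⟩ := Nat.exists_eq_add_of_le' hr
  refine le_minTwins (by omega) fun M ⟨hM, hcard, _⟩ => ?_
  subst hcard
  rw [Nat.cast_add, Nat.cast_two, Nat.add_sub_assoc one_le_two]
  split_ifs with hg
  · obtain rfl : g = 0 := by omega
    simpa using mul_rpow_le_twinMax (c := 1) hα₀ hα hβ htau le_rfl (by norm_num) hM hn
  · exact mul_rpow_le_twinMax hα₀ hα hβ htau one_le_two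
      (succ_mul_doubleFactorial_mul_pow_le g) hM hn

/-- Corollary 3.3, `corol`. If `3/5 ≤ α ≤ 2/3`, `β > 0` and
`τ(n) ≥ β·n^α` for all `n ≥ 2`, then for all `r ≥ 2` and `n ≥ 2`,
`t^(r)(n) ≥ β_r·(n/(6r))^{α·η_{r-1}}`, where `β_2 = β` and, for `r ≥ 3`,
`β_r = min{min_{2 ≤ p ≤ r-2} β_p·(12r)^{-α·η_{p-1}}, β·2^{-α}}` (the minimum of
the set consisting of `β·2^{-α}` together with all `β_p·(12r)^{-α·η_{p-1}}`,
`2 ≤ p ≤ r-2`; for `r = 3` this set is just `{β·2^{-α}}`). The sequence `β_r` is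
encoded as any function `B : ℕ → ℝ` satisfying this recurrence. -/
theorem corollary_recursive_bound (α β : ℝ) (hα₁ : 3 / 5 ≤ α) (hα₂ : α ≤ 2 / 3)
    (hβ : 0 < β)
    (htau : ∀ n : ℕ, 2 ≤ n → β * (n : ℝ) ^ α ≤ (permTau n : ℝ))
    (B : ℕ → ℝ) (hB2 : B 2 = β)
    (hBrec : ∀ r : ℕ, 3 ≤ r → B r = sInf (insert (β * (2 : ℝ) ^ (-α))
      {x : ℝ | ∃ p : ℕ, 2 ≤ p ∧ p ≤ r - 2 ∧
        x = B p * (12 * (r : ℝ)) ^ (-(α * etaExp (p - 1)))})) :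
    ∀ r : ℕ, 2 ≤ r → ∀ n : ℕ, 2 ≤ n →
      B r * ((n : ℝ) / (6 * r)) ^ (α * etaExp (r - 1)) ≤ (minTwins r n : ℝ) := by
  intro r hr n hn
  have hgeneral := corollary_recursive_bound_general α β (by linarith) hα₂ hβ.le htau r hr n hn
  exact (mul_le_mul_of_nonneg_right (recursiveBound_le hB2 hBrec hr) (by positivity)).trans hgeneral
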